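/- Let q be a power of a prime p, let k, f be positive integers with f | k, f > 1 and gcd(k/f, q−1) = 1, let a ∈ F_q^*, and let D = {x ∈ F_{q^k} : Tr_{q^f/q}(x^{(q^k−1)/(q^f−1)}) + a = 0}. Then for every b ∈ F_{q^k}^*, the Hamming weight w(c_b) = #{d ∈ D : Tr_{q^k/q}(b d) ≠ 0} satisfies w(c_b) ≥ ((q−1)q^{f+k−2} − (q^f − q)q^{(k+f)/2 − 2})/(q^f − 1), and this lower bound is strictly positive; in particular the code C_D has dimension k over F_q. -/

import Mathlib

/-
Let `K ⊆ F ⊆ L` be the three fields and let `C y` be the weight of the codeword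
`x ↦ Tr_{L/K} (b * x)` on the fiber of the norm `N_{L/F}` over `y`. As `[L : F]` is coprime to
`|Kˣ|`, every element of `Kˣ` is a norm from `Kˣ`, so `C` is constant on `Kˣ`-orbits and the wanted
weight, the sum of `C` over a nonzero fiber of `Tr_{F/K}`, is read off from the correlation of `C`
with the indicator of `Tr_{F/K} y ≠ 0`. The second moment of `C` counts the pairs `(x, t)` with
`N t = 1` and both `Tr (b * x)`, `Tr (b * t * x)` nonzero. By coprimality again, `t ≠ 1` of norm one
lies outside `K`, so these two traces are independent uniform variables and the second moment is
known exactly. Cauchy–Schwarz then bounds the deviation of the weight from its mean.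
-/

section

open Finset Module

lemma sq_card_mul_sum_mul_sub_le {ι R : Type*} [CommRing R] [LinearOrder R] [IsStrictOrderedRing R]
    (s : Finset ι) (f g : ι → R) :
    (#s * ∑ i ∈ s, f i * g i - (∑ i ∈ s, f i) * ∑ i ∈ s, g i) ^ 2 ≤
      (#s * ∑ i ∈ s, f i ^ 2 - (∑ i ∈ s, f i) ^ 2) *
        (#s * ∑ i ∈ s, g i ^ 2 - (∑ i ∈ s, g i) ^ 2) := by
  obtain rfl | hs := s.eq_empty_or_nonempty
  · simp
  have centered (u v : ι → R) :
      ∑ i ∈ s, (#s * u i - ∑ j ∈ s, u j) * (#s * v i - ∑ j ∈ s, v j) =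
        #s * (#s * ∑ i ∈ s, u i * v i - (∑ i ∈ s, u i) * ∑ i ∈ s, v i) := by
    calc _ = ∑ i ∈ s, (#s ^ 2 * (u i * v i) - #s * (∑ j ∈ s, v j) * u i
              - #s * (∑ j ∈ s, u j) * v i + (∑ j ∈ s, u j) * ∑ j ∈ s, v j) :=
          sum_congr rfl fun i _ ↦ by ring
      _ = _ := by
          simp only [sum_add_distrib, sum_sub_distrib, ← mul_sum, sum_const, nsmul_eq_mul]
          ring
  have cauchySchwarz := sum_mul_sq_le_sq_mul_sq s (fun i ↦ #s * f i - ∑ j ∈ s, f j)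
    (fun i ↦ #s * g i - ∑ j ∈ s, g j)
  simp only [centered, sq (_ - _)] at cauchySchwarz
  have card_pos : (0 : R) < #s ^ 2 := by
    have : (0 : R) < #s := by exact_mod_cast hs.card_pos
    positivity
  refine le_of_mul_le_mul_left ?_ card_pos
  simp only [sq] at cauchySchwarz ⊢
  linarith

section Counting

@[to_additive card_filter_addMonoidHom_mem_mul_card]
lemma card_filter_monoidHom_mem_mul_card {G H : Type*} [Group G] [Group H] [Fintype G] [Fintype H]
    [DecidableEq H]
    (f : G →* H) (hf : Function.Surjective f) (S : Finset H) :
    #{g | f g ∈ S} * Fintype.card H = #S * Fintype.card G := by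
  have card_filter_mem (T : Finset H) : #{g | f g ∈ T} = #T * #{g | f g = 1} := by
    rw [← sum_card_fiberwise_eq_card_filter]
    exact sum_const_nat fun h _ ↦ MonoidHom.card_fiber_eq_of_mem_range f (hf h) (hf 1)
  have card_domain := card_filter_mem univ
  simp only [mem_univ, filter_true, card_univ] at card_domain
  rw [card_filter_mem S, card_domain]
  ring

variable {K V ι : Type*} [Field K] [AddCommGroup V] [Module K V]

lemma surjective_pi_of_linearIndependent [Finite ι] {φ : ι → Dual K V}
    (hφ : LinearIndependent K φ) : Function.Surjective (LinearMap.pi φ) := by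
  classical
  have := Fintype.ofFinite ι
  rw [← LinearMap.dualMap_injective_iff, injective_iff_map_eq_zero]
  intro g hg
  have relation : ∑ i, g (Pi.single i 1) • φ i = 0 := by
    ext x
    have : g (LinearMap.pi φ x) = 0 := LinearMap.congr_fun hg x
    rw [pi_eq_sum_univ' (LinearMap.pi φ x)] at this
    simpa [mul_comm] using this
  have coeff := Fintype.linearIndependent_iff.mp hφ _ relation
  ext i
  simpa using coeff i

variable [Fintype K] [DecidableEq K] [Fintype V]

lemma card_forall_dual_ne_zero [Fintype ι] {φ : ι → Dual K V} (hφ : LinearIndependent K φ) :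
    (#{x | ∀ i, φ i x ≠ 0} : ℝ) =
      (1 - 1 / Fintype.card K) ^ Fintype.card ι * Fintype.card V := by
  classical
  have count := card_filter_addMonoidHom_mem_mul_card (LinearMap.pi φ).toAddMonoidHom
    (surjective_pi_of_linearIndependent hφ) (Fintype.piFinset fun _ ↦ univ.erase 0)
  simp only [LinearMap.toAddMonoidHom_coe, LinearMap.pi_apply, Fintype.mem_piFinset, mem_erase,
    mem_univ, and_true, Fintype.card_pi, Fintype.card_piFinset, prod_const, card_univ,
    card_erase_of_mem] at count
  have hK : (Fintype.card K : ℝ) ≠ 0 := by simp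
  have count' := congrArg (Nat.cast : ℕ → ℝ) count
  push_cast [Nat.cast_pred Fintype.card_pos] at count'
  rw [one_sub_div hK, div_pow, div_mul_eq_mul_div, eq_div_iff (pow_ne_zero _ hK)]
  exact count'

lemma card_dual_ne_zero {φ : Dual K V} (hφ : φ ≠ 0) :
    (#{x | φ x ≠ 0} : ℝ) = (1 - 1 / Fintype.card K) * Fintype.card V := by
  simpa using card_forall_dual_ne_zero (φ := fun _ : Unit ↦ φ) (.of_subsingleton () hφ)

end Counting

section HomogeneousWeight

variable {K V : Type*} [Field K] [Fintype K] [DecidableEq K] [AddCommGroup V] [Module K V]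
  [Fintype V] {φ : Dual K V} {C : V → ℝ}

lemma sum_filter_dual_ne_zero (hC : ∀ c : K, c ≠ 0 → ∀ v, C (c • v) = C v) (φ : Dual K V)
    {c : K} (hc : c ≠ 0) :
    ∑ v with φ v ≠ 0, C v = (Fintype.card K - 1) * ∑ v with φ v = c, C v := by
  have sum_fiber (d : K) (hd : d ≠ 0) : ∑ v with φ v = d, C v = ∑ v with φ v = c, C v :=
    sum_bij' (fun v _ ↦ (c / d) • v) (fun v _ ↦ (d / c) • v)
      (by simp +contextual [hd]) (by simp +contextual [hc])
      (by simp [smul_smul, hc, hd]) (by simp [smul_smul, hc, hd])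
      fun v _ ↦ (hC _ (div_ne_zero hc hd) v).symm
  calc ∑ v with φ v ≠ 0, C v
      = ∑ d ∈ univ.erase 0, ∑ v with φ v = d, C v := by
        rw [sum_fiberwise_eq_sum_filter univ (univ.erase 0) φ C]
        simp
    _ = ∑ _ ∈ univ.erase (0 : K), ∑ v with φ v = c, C v :=
        sum_congr rfl fun d hd ↦ sum_fiber d (ne_of_mem_erase hd)
    _ = (Fintype.card K - 1) * ∑ v with φ v = c, C v := by
        simp [card_erase_of_mem, Nat.cast_pred Fintype.card_pos]

lemma sq_sum_filter_dual_eq_sub_le (hC : ∀ c : K, c ≠ 0 → ∀ v, C (c • v) = C v) (hC0 : C 0 = 0)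
    (hφ : φ ≠ 0) {c : K} (hc : c ≠ 0) :
    (Fintype.card K - 1) * (Fintype.card K * (Fintype.card V - 1) * ∑ v with φ v = c, C v -
        Fintype.card V * ∑ v, C v) ^ 2 ≤
      Fintype.card V * (Fintype.card V - Fintype.card K) *
        ((Fintype.card V - 1) * ∑ v, C v ^ 2 - (∑ v, C v) ^ 2) := by
  classical
  have covariance := sq_card_mul_sum_mul_sub_le (univ.erase 0)
    (fun v ↦ if φ v ≠ 0 then (1 : ℝ) else 0) C
  have indicator_sq (v : V) : (if φ v ≠ 0 then (1 : ℝ) else 0) ^ 2 = if φ v ≠ 0 then 1 else 0 := by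
    split_ifs <;> simp
  have indicator_mul (v : V) : (if φ v ≠ 0 then (1 : ℝ) else 0) * C v =
      if φ v ≠ 0 then C v else 0 := by
    split_ifs <;> simp
  simp only [indicator_sq, indicator_mul] at covariance
  rw [sum_erase _ (by simp), sum_erase _ (by simp), sum_erase _ hC0, sum_erase _ (by simp [hC0]),
    sum_boole, ← sum_filter, sum_filter_dual_ne_zero hC φ hc, card_dual_ne_zero hφ,
    card_erase_of_mem (mem_univ _), card_univ, Nat.cast_pred Fintype.card_pos] at covariance
  have hq : (1 : ℝ) < Fintype.card K := by exact_mod_cast Fintype.one_lt_card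
  generalize (Fintype.card K : ℝ) = q at *
  generalize (Fintype.card V : ℝ) = F at *
  generalize ∑ v with φ v = c, C v = w at *
  generalize ∑ v, C v = σ at *
  generalize ∑ v, C v ^ 2 = τ at *
  have hq' : 0 < q - 1 := by linarith
  refine le_of_mul_le_mul_left ?_ (show 0 < (q - 1) / q ^ 2 by positivity)
  calc _ = ((F - 1) * ((q - 1) * w) - (1 - 1 / q) * F * σ) ^ 2 := by field_simp
    _ ≤ _ := covariance
    _ = _ := by field_simp; ring

end HomogeneousWeight

section TraceNorm

variable {K F L : Type*} [Field K] [Field F] [Field L]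

lemma linearIndependent_traceForm_apply [Algebra K L] [FiniteDimensional K L]
    [Algebra.IsSeparable K L] {ι : Type*} {v : ι → L} (hv : LinearIndependent K v) :
    LinearIndependent K fun i ↦ Algebra.traceForm K L (v i) :=
  hv.map' _ (traceForm_nondegenerate K L).ker_eq_bot

section Trace

variable [Algebra K L] [Fintype K] [DecidableEq K] [Fintype L]

lemma card_trace_mul_ne_zero {b : L} (hb : b ≠ 0) :
    (#{x : L | Algebra.trace K L (b * x) ≠ 0} : ℝ) =
      (1 - 1 / Fintype.card K) * Fintype.card L :=
  card_dual_ne_zero (φ := Algebra.traceForm K L b) <|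
    (linearIndependent_traceForm_apply (v := fun _ : Unit ↦ b) (.of_subsingleton () hb)).ne_zero ()

lemma card_trace_mul_ne_zero_and_ne_zero {b c : L} (h : LinearIndependent K ![b, c]) :
    (#{x : L | Algebra.trace K L (b * x) ≠ 0 ∧ Algebra.trace K L (c * x) ≠ 0} : ℝ) =
      (1 - 1 / Fintype.card K) ^ 2 * Fintype.card L := by
  simpa [Fin.forall_fin_two] using card_forall_dual_ne_zero (linearIndependent_traceForm_apply h)

end Trace

lemma card_norm_eq_one_mul [Algebra F L] [Fintype F] [DecidableEq F] [Fintype L] :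
    #{t : L | Algebra.norm F t = 1} * (Fintype.card F - 1) = Fintype.card L - 1 := by
  classical
  have units_count := card_filter_monoidHom_mem_mul_card (Units.map (Algebra.norm F (S := L)))
    (FiniteField.unitsMap_norm_surjective F L) {1}
  rw [Fintype.card_units, Fintype.card_units, card_singleton, one_mul] at units_count
  rw [← units_count]
  congr 1
  refine (card_nbij Units.val ?_ Units.val_injective.injOn ?_).symm
  · intro u hu
    simpa [Units.ext_iff] using hu
  · intro t ht
    obtain ⟨u, rfl⟩ : IsUnit t := isUnit_iff_ne_zero.mpr <| by
      rintro rfl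
      simp at ht
    exact ⟨u, by simpa [Units.ext_iff] using ht, rfl⟩

variable [Algebra K F] [Algebra F L] [Algebra K L] [IsScalarTower K F L]

lemma norm_smul_eq_pow_finrank_smul (c : K) (x : L) :
    Algebra.norm F (c • x) = c ^ finrank F L • Algebra.norm F x := by
  rw [Algebra.smul_def, IsScalarTower.algebraMap_apply K F L, map_mul, Algebra.norm_algebraMap,
    Algebra.smul_def, map_pow]

lemma eq_one_of_norm_algebraMap_eq_one [FiniteDimensional F L]
    (hcop : (Nat.card Kˣ).Coprime (finrank F L)) {c : K}
    (hc : Algebra.norm F (algebraMap K L c) = 1) : c = 1 := by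
  have pow_eq_one : c ^ finrank F L = 1 := by
    refine (algebraMap K F).injective ?_
    rw [map_pow, ← Algebra.norm_algebraMap, ← IsScalarTower.algebraMap_apply, hc, map_one]
  obtain ⟨u, rfl⟩ := IsUnit.of_pow_eq_one pow_eq_one finrank_pos.ne'
  have : u = 1 := hcop.pow_left_bijective.injective (by simpa [Units.ext_iff] using pow_eq_one)
  simp [this]

end TraceNorm

section NormFiber

variable {K F L : Type*} [Field K] [Field F] [Field L] [Algebra F L] [Algebra K L] [Fintype L]
  [DecidableEq K] [DecidableEq F]

variable (K) in
/-- The Hamming weight of the codeword `x ↦ Tr_{L/K} (b * x)` restricted to the fiber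
`{x | N_{L/F} x = y}` of the norm. The weight of `c_b` is the sum of these over the `y` with
`Tr_{F/K} y = -a`. -/
noncomputable def normFiberWeight (b : L) (y : F) : ℕ :=
  #{x : L | Algebra.norm F x = y ∧ Algebra.trace K L (b * x) ≠ 0}

lemma sum_filter_normFiberWeight [Fintype F] (b : L) (P : F → Prop)
    [DecidablePred P] :
    ∑ y with P y, normFiberWeight K b y =
      #{x : L | P (Algebra.norm F x) ∧ Algebra.trace K L (b * x) ≠ 0} := by
  simpa [normFiberWeight, filter_filter, and_comm] using
    sum_card_fiberwise_eq_card_filter {x : L | Algebra.trace K L (b * x) ≠ 0} {y | P y}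
      (Algebra.norm F)

lemma normFiberWeight_zero (b : L) : normFiberWeight K b (0 : F) = 0 := by
  have := Module.Finite.of_finite (R := F) (M := L)
  simp +contextual [normFiberWeight, Algebra.norm_eq_zero_iff]

lemma normFiberWeight_norm {b x : L} (hx : x ≠ 0) :
    normFiberWeight K b (Algebra.norm F x) =
      #{t : L | Algebra.norm F t = 1 ∧ Algebra.trace K L (b * (t * x)) ≠ 0} := by
  have norm_ne_zero : Algebra.norm F x ≠ 0 := Algebra.norm_ne_zero_iff.mpr hx
  refine (card_bijective (· * x) (mulRight_bijective₀ x hx) fun t ↦ ?_).symm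
  simp [norm_ne_zero]

lemma sum_normFiberWeight_sq [Fintype F] (b : L) :
    ∑ y : F, normFiberWeight K b y ^ 2 = ∑ t : L with Algebra.norm F t = 1,
      #{x : L | Algebra.trace K L (b * x) ≠ 0 ∧ Algebra.trace K L (b * t * x) ≠ 0} := by
  calc ∑ y : F, normFiberWeight K b y ^ 2
      = ∑ y : F, ∑ x : L with Algebra.trace K L (b * x) ≠ 0 ∧ Algebra.norm F x = y,
          normFiberWeight K b y := by
        simp [normFiberWeight, sq, and_comm]
    _ = ∑ x : L with Algebra.trace K L (b * x) ≠ 0, normFiberWeight K b (Algebra.norm F x) := by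
        simp_rw [← filter_filter]
        exact sum_fiberwise' _ _ _
    _ = ∑ x : L with Algebra.trace K L (b * x) ≠ 0,
          #{t : L | Algebra.norm F t = 1 ∧ Algebra.trace K L (b * (t * x)) ≠ 0} :=
        sum_congr rfl fun x hx ↦ normFiberWeight_norm <| by
          rintro rfl
          simp at hx
    _ = ∑ t : L with Algebra.norm F t = 1,
          #{x : L | Algebra.trace K L (b * x) ≠ 0 ∧ Algebra.trace K L (b * t * x) ≠ 0} := by
        simp_rw [← filter_filter, mul_assoc]
        exact sum_card_bipartiteAbove_eq_sum_card_bipartiteBelow _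

variable [Algebra K F] [IsScalarTower K F L]

lemma normFiberWeight_smul (hcop : (Nat.card Kˣ).Coprime (finrank F L)) (b : L)
    {c : K} (hc : c ≠ 0) (y : F) : normFiberWeight K b (c • y) = normFiberWeight K b y := by
  obtain ⟨u, hu⟩ := hcop.pow_left_bijective.surjective (Units.mk0 c hc)
  have hu : (u : K) ^ finrank F L = c := congrArg Units.val hu
  refine (card_bijective (u • ·) (MulAction.bijective u) fun x ↦ ?_).symm
  simp [Units.smul_def, norm_smul_eq_pow_finrank_smul, hu, hc]

variable [Fintype K] [Fintype F]

lemma sum_normFiberWeight_sq_eq (hcop : (Nat.card Kˣ).Coprime (finrank F L))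
    {b : L} (hb : b ≠ 0) :
    ∑ y : F, (normFiberWeight K b y : ℝ) ^ 2 =
      (1 - 1 / Fintype.card K) * Fintype.card L + (#{t : L | Algebra.norm F t = 1} - 1) *
        ((1 - 1 / Fintype.card K) ^ 2 * Fintype.card L) := by
  classical
  have pair_independent (t : L) (norm_t : Algebra.norm F t = 1) (ht : t ≠ 1) :
      LinearIndependent K ![b, b * t] := by
    rw [LinearIndependent.pair_iff' hb]
    rintro c hct
    obtain rfl : algebraMap K L c = t := by
      rw [Algebra.smul_def, mul_comm] at hct
      exact mul_left_cancel₀ hb hct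
    exact ht (by rw [eq_one_of_norm_algebraMap_eq_one hcop norm_t, map_one])
  have one_mem : (1 : L) ∈ ({t | Algebra.norm F t = 1} : Finset L) := by simp
  have second_moment := congrArg (Nat.cast : ℕ → ℝ) (sum_normFiberWeight_sq (K := K) (F := F) b)
  push_cast at second_moment
  rw [second_moment, ← add_sum_erase _ _ one_mem]
  congr 1
  · simpa using card_trace_mul_ne_zero (K := K) hb
  · rw [sum_congr rfl fun t ht ↦ card_trace_mul_ne_zero_and_ne_zero (pair_independent t
      (by simpa using mem_of_mem_erase ht) (ne_of_mem_erase ht)), sum_const, nsmul_eq_mul,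
      card_erase_of_mem one_mem, Nat.cast_pred (card_pos.mpr ⟨1, one_mem⟩)]

end NormFiber

section WeightBound

-- `q`, `s`, `r` are the orders of the three fields, `n` counts the elements of norm one, and `w` is
-- the weight of a codeword.
lemma abs_sub_le_of_sq_sub_le {q s r n w : ℝ} (hq : 1 < q) (hqs : q ≤ s) (hr : 0 ≤ r)
    (hn : n * (s - 1) = r - 1)
    (hw : (q - 1) * (q * (s - 1) * w - s * ((1 - 1 / q) * r)) ^ 2 ≤
      s * (s - q) * ((s - 1) * ((1 - 1 / q) * r + (n - 1) * ((1 - 1 / q) ^ 2 * r)) -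
        ((1 - 1 / q) * r) ^ 2)) :
    |(s - 1) * w - (q - 1) * (s * r) / q ^ 2| ≤ (s - q) * √(s * r) / q ^ 2 := by
  have hq' : 0 < q - 1 := sub_pos.mpr hq
  have : 0 ≤ s - q := sub_nonneg.mpr hqs
  refine abs_le_of_sq_le_sq ?_ (by positivity)
  calc ((s - 1) * w - (q - 1) * (s * r) / q ^ 2) ^ 2
      = (q - 1) * (q * (s - 1) * w - s * ((1 - 1 / q) * r)) ^ 2 / ((q - 1) * q ^ 2) := by
        field_simp
    _ ≤ s * (s - q) * ((s - 1) * ((1 - 1 / q) * r + (n - 1) * ((1 - 1 / q) ^ 2 * r)) -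
          ((1 - 1 / q) * r) ^ 2) / ((q - 1) * q ^ 2) := by gcongr
    _ = s * (s - q) * ((1 - 1 / q) * r * ((s - 1) + (n * (s - 1) - (s - 1)) * (1 - 1 / q) -
          (1 - 1 / q) * r)) / ((q - 1) * q ^ 2) := by ring
    _ = (s - q) ^ 2 * (s * r) / q ^ 4 := by
        rw [hn]
        field_simp
        ring
    _ = ((s - q) * √(s * r) / q ^ 2) ^ 2 := by
        have hsr : 0 ≤ s * r := mul_nonneg (by linarith) hr
        rw [div_pow, mul_pow, Real.sq_sqrt hsr, ← pow_mul]

variable {K L : Type*} (F : Type*) [Field K] [Field F] [Field L] [Algebra K F] [Algebra F L]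
  [Algebra K L] [IsScalarTower K F L] [Fintype K] [Fintype F] [Fintype L]

theorem abs_card_trace_norm_eq_sub_le [DecidableEq K] (hcop : (Nat.card Kˣ).Coprime (finrank F L))
    {b : L} (hb : b ≠ 0) {c : K} (hc : c ≠ 0) :
    |(Fintype.card F - 1) *
        (#{x : L | Algebra.trace K F (Algebra.norm F x) = c ∧ Algebra.trace K L (b * x) ≠ 0} : ℝ) -
      (Fintype.card K - 1) * (Fintype.card F * Fintype.card L) / Fintype.card K ^ 2| ≤
      (Fintype.card F - Fintype.card K) * √(Fintype.card F * Fintype.card L) /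
        Fintype.card K ^ 2 := by
  classical
  have total : ∑ y : F, (normFiberWeight K b y : ℝ) =
      (1 - 1 / Fintype.card K) * Fintype.card L := by
    have := sum_filter_normFiberWeight (K := K) (F := F) b fun _ ↦ True
    rw [← card_trace_mul_ne_zero hb]
    simpa using congrArg (Nat.cast : ℕ → ℝ) this
  have weight := congrArg (Nat.cast : ℕ → ℝ)
    (sum_filter_normFiberWeight (K := K) b fun y : F ↦ Algebra.trace K F y = c)
  have norm_one := congrArg (Nat.cast : ℕ → ℝ) (card_norm_eq_one_mul (F := F) (L := L))
  have deviation := sq_sum_filter_dual_eq_sub_le (C := fun y : F ↦ (normFiberWeight K b y : ℝ))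
    (fun c hc y ↦ by rw [normFiberWeight_smul hcop b hc]) (by simp [normFiberWeight_zero])
    (Algebra.trace_ne_zero K F) hc
  push_cast [Nat.cast_pred Fintype.card_pos] at weight norm_one
  rw [total, sum_normFiberWeight_sq_eq hcop hb, weight] at deviation
  exact abs_sub_le_of_sq_sub_le (mod_cast Fintype.one_lt_card)
    (mod_cast Fintype.card_le_of_injective _ (algebraMap K F).injective) (by positivity)
    norm_one deviation

lemma lower_bound_le_card_trace_norm_eq (hcop : (Nat.card Kˣ).Coprime (finrank F L))
    {b : L} (hb : b ≠ 0) {c : K} (hc : c ≠ 0) :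
    ((Fintype.card K - 1) * (Fintype.card F * Fintype.card L) / Fintype.card K ^ 2 -
        (Fintype.card F - Fintype.card K) * √(Fintype.card F * Fintype.card L) /
          Fintype.card K ^ 2) / (Fintype.card F - 1) ≤
      Nat.card {x : L // Algebra.trace K F (Algebra.norm F x) = c ∧
        Algebra.trace K L (b * x) ≠ 0} := by
  classical
  have hF : (1 : ℝ) < Fintype.card F := mod_cast Fintype.one_lt_card
  rw [Nat.card_eq_fintype_card, Fintype.card_subtype, div_le_iff₀' (sub_pos.mpr hF)]
  linarith [(abs_le.mp (abs_card_trace_norm_eq_sub_le F hcop hb hc)).1]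

end WeightBound

section LowerBound

variable {q F L : ℝ}

lemma lower_bound_pos (hq : 2 ≤ q) (hqF : q ≤ F) (hFL : F ≤ L) :
    0 < ((q - 1) * (F * L) / q ^ 2 - (F - q) * √(F * L) / q ^ 2) / (F - 1) := by
  have sqrt_le : √(F * L) ≤ L := by
    rw [Real.sqrt_le_left (by linarith), sq]
    gcongr
    linarith
  have main_term_gt : (F - q) * √(F * L) < (q - 1) * (F * L) := by
    calc (F - q) * √(F * L) ≤ (F - q) * L := by gcongr
      _ < F * L := by gcongr <;> linarith
      _ ≤ (q - 1) * (F * L) := le_mul_of_one_le_left (by nlinarith) (by linarith)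
  rw [← sub_div]
  exact div_pos (div_pos (sub_pos.mpr main_term_gt) (by positivity)) (by linarith)

lemma lower_bound_eq (hq : 0 < q) {f k : ℕ} (hfk : 2 ≤ f + k) :
    ((q - 1) * q ^ (f + k - 2) - (q ^ f - q) * q ^ (((k : ℝ) + f) / 2 - 2)) / (q ^ f - 1) =
      ((q - 1) * (q ^ f * q ^ k) / q ^ 2 - (q ^ f - q) * √(q ^ f * q ^ k) / q ^ 2) /
        (q ^ f - 1) := by
  have main_term : q ^ (f + k - 2) = q ^ f * q ^ k / q ^ 2 := by
    rw [pow_sub₀ _ hq.ne' hfk, pow_add, div_eq_mul_inv]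
  have error_term : q ^ (((k : ℝ) + f) / 2 - 2) = √(q ^ f * q ^ k) / q ^ 2 := by
    rw [Real.rpow_sub hq, Real.rpow_two, Real.sqrt_eq_rpow, ← pow_add,
      ← Real.rpow_natCast q (f + k), ← Real.rpow_mul hq.le]
    congr 2
    push_cast
    ring
  rw [main_term, error_term, ← mul_div_assoc, ← mul_div_assoc]

end LowerBound

section Tower

lemma ne_zero_of_card_eq_pow {F : Type*} [Fintype F] [Nontrivial F] {q f : ℕ}
    (hF : Fintype.card F = q ^ f) : f ≠ 0 := by
  rintro rfl
  simpa [hF] using Fintype.one_lt_card (α := F)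

lemma finrank_eq_div_of_card_eq_pow {F V : Type*} [Field F] [AddCommGroup V] [Module F V]
    [Fintype F] [Fintype V] {q f k : ℕ} (hq : 1 < q) (hF : Fintype.card F = q ^ f)
    (hV : Fintype.card V = q ^ k) : finrank F V = k / f := by
  have card_pow := card_eq_pow_finrank (K := F) (V := V)
  rw [hF, hV, ← pow_mul] at card_pow
  rw [Nat.pow_right_injective hq card_pow,
    Nat.mul_div_cancel_left _ (ne_zero_of_card_eq_pow hF).bot_lt]

lemma injective_trace_mul_of_exists_ne_zero {K L : Type*} [Field K] [Field L] [Algebra K L]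
    {D : L → Prop} (h : ∀ b : L, b ≠ 0 → ∃ x, D x ∧ Algebra.trace K L (b * x) ≠ 0) :
    Function.Injective fun (b : L) (d : {x // D x}) ↦ Algebra.trace K L (b * d) := by
  intro b b' hbb'
  by_contra hne
  obtain ⟨x, hx, trace_ne_zero⟩ := h (b - b') (sub_ne_zero.mpr hne)
  refine trace_ne_zero ?_
  rw [sub_mul, map_sub, sub_eq_zero]
  exact congrFun hbb' ⟨x, hx⟩

end Tower

end

theorem stmt15_general (q f k : ℕ) (hgcd : Nat.gcd (k / f) (q - 1) = 1)
    (Fq Ff Fk : Type*) [Field Fq] [Field Ff] [Field Fk]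
    [Fintype Fq] [Fintype Ff] [Fintype Fk]
    [Algebra Fq Ff] [Algebra Ff Fk] [Algebra Fq Fk] [IsScalarTower Fq Ff Fk]
    (hcq : Fintype.card Fq = q) (hcf : Fintype.card Ff = q ^ f)
    (hck : Fintype.card Fk = q ^ k) (a : Fq) (ha : a ≠ 0) :
    (0 : ℝ) < (((q : ℝ) - 1) * (q : ℝ) ^ (f + k - 2) -
        ((q : ℝ) ^ f - q) * (q : ℝ) ^ (((k : ℝ) + f) / 2 - 2)) / ((q : ℝ) ^ f - 1) ∧
    (∀ b : Fk, b ≠ 0 →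
      (((q : ℝ) - 1) * (q : ℝ) ^ (f + k - 2) -
          ((q : ℝ) ^ f - q) * (q : ℝ) ^ (((k : ℝ) + f) / 2 - 2)) / ((q : ℝ) ^ f - 1)
        ≤ (Nat.card {d : Fk // Algebra.trace Fq Ff (Algebra.norm Ff d) + a = 0 ∧
            Algebra.trace Fq Fk (b * d) ≠ 0} : ℝ)) ∧
    Function.Injective
      (fun (b : Fk)
          (d : {x : Fk // Algebra.trace Fq Ff (Algebra.norm Ff x) + a = 0}) =>
        Algebra.trace Fq Fk (b * (d : Fk))) := by
  subst hcq
  have hq : 1 < Fintype.card Fq := Fintype.one_lt_card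
  have hf : f ≠ 0 := ne_zero_of_card_eq_pow hcf
  have hk : k ≠ 0 := ne_zero_of_card_eq_pow hck
  have hF : (Fintype.card Fq : ℝ) ^ f = Fintype.card Ff := mod_cast hcf.symm
  have hL : (Fintype.card Fq : ℝ) ^ k = Fintype.card Fk := mod_cast hck.symm
  have hcop : (Nat.card Fqˣ).Coprime (Module.finrank Ff Fk) := by
    rw [Nat.card_units, Nat.card_eq_fintype_card, finrank_eq_div_of_card_eq_pow hq hcf hck]
    exact Nat.Coprime.symm hgcd
  rw [lower_bound_eq (by positivity) (by omega), hF, hL]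
  have bound_pos := lower_bound_pos (q := Fintype.card Fq) (F := Fintype.card Ff)
    (L := Fintype.card Fk) (mod_cast hq)
    (mod_cast Fintype.card_le_of_injective _ (algebraMap Fq Ff).injective)
    (mod_cast Fintype.card_le_of_injective _ (algebraMap Ff Fk).injective)
  have weight_ge (b : Fk) (hb : b ≠ 0) :=
    lower_bound_le_card_trace_norm_eq Ff hcop hb (neg_ne_zero.mpr ha)
  simp only [← add_eq_zero_iff_eq_neg] at weight_ge
  refine ⟨bound_pos, weight_ge, injective_trace_mul_of_exists_ne_zero fun b hb ↦ ?_⟩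
  obtain ⟨⟨x, hx⟩⟩ := (Nat.card_pos_iff.mp (mod_cast bound_pos.trans_le (weight_ge b hb))).1
  exact ⟨x, hx⟩

/-- **Theorem 2, bound for `f > 1`.** Let `q` be a power of a prime `p`,
`f ∣ k`, `f > 1`, `gcd(k/f, q-1) = 1`, `a ∈ F_qˣ`, and
`D = {x ∈ F_{q^k} : Tr_{q^f/q}(x^{(q^k-1)/(q^f-1)}) + a = 0}`.  Then for every
`b ∈ F_{q^k}ˣ` the Hamming weight `w(c_b) = #{d ∈ D : Tr_{q^k/q}(bd) ≠ 0}` satisfies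
`w(c_b) ≥ ((q-1)q^{f+k-2} − (q^f-q)q^{(k+f)/2-2})/(q^f-1)`, this lower bound is strictly
positive, and consequently `C_D` has dimension `k` (`b ↦ c_b` is injective). -/
theorem stmt15 (p e q f k : ℕ) [Fact p.Prime] (he : 0 < e) (hq : q = p ^ e)
    (hf : 1 < f) (hfk : f ∣ k) (hgcd : Nat.gcd (k / f) (q - 1) = 1)
    (Fq Ff Fk : Type) [Field Fq] [Field Ff] [Field Fk]
    [Fintype Fq] [Fintype Ff] [Fintype Fk]
    [Algebra Fq Ff] [Algebra Ff Fk] [Algebra Fq Fk] [IsScalarTower Fq Ff Fk]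
    (hcq : Fintype.card Fq = q) (hcf : Fintype.card Ff = q ^ f)
    (hck : Fintype.card Fk = q ^ k)
    (hnorm : ∀ x : Fk,
      algebraMap Ff Fk (Algebra.norm Ff x) = x ^ ((q ^ k - 1) / (q ^ f - 1)))
    (a : Fq) (ha : a ≠ 0) :
    (0 : ℝ) < (((q : ℝ) - 1) * (q : ℝ) ^ (f + k - 2) -
        ((q : ℝ) ^ f - q) * (q : ℝ) ^ (((k : ℝ) + f) / 2 - 2)) / ((q : ℝ) ^ f - 1) ∧
    (∀ b : Fk, b ≠ 0 →
      (((q : ℝ) - 1) * (q : ℝ) ^ (f + k - 2) -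
          ((q : ℝ) ^ f - q) * (q : ℝ) ^ (((k : ℝ) + f) / 2 - 2)) / ((q : ℝ) ^ f - 1)
        ≤ (Nat.card {d : Fk // Algebra.trace Fq Ff (Algebra.norm Ff d) + a = 0 ∧
            Algebra.trace Fq Fk (b * d) ≠ 0} : ℝ)) ∧
    Function.Injective
      (fun (b : Fk)
          (d : {x : Fk // Algebra.trace Fq Ff (Algebra.norm Ff x) + a = 0}) =>
        Algebra.trace Fq Fk (b * (d : Fk))) :=
  stmt15_general q f k hgcd Fq Ff Fk hcq hcf hck a ha
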